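/- Let d ≥ 2, let H be a d×d Hermitian matrix with ΔH := H − (Tr[H]/d)·I nonzero, let ψ ∈ ℂ^d be a unit vector, and for p ∈ ℕ set Σ^(p) := ∫_{U(d)} (Tr[U |ψ⟩⟨ψ| U† H] − Tr[H]/d)^p dμ_Haar(U). Then for every odd integer p ≥ 3, |Σ^(p)| ≤ √(η_{ΔH}) · ⌈p!/e⌉ · (Tr[ΔH²])^{p/2} / (d(d+1))^{p/2}, where e is Euler's number. -/

import Mathlib

open MeasureTheory Matrix
open scoped ComplexOrder

noncomputable instance unitaryGroup.measurableSpace (d : ℕ) :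
    MeasurableSpace (Matrix.unitaryGroup (Fin d) ℂ) := borel _

instance unitaryGroup.borelSpace (d : ℕ) :
    BorelSpace (Matrix.unitaryGroup (Fin d) ℂ) := ⟨rfl⟩

/-- `η_Θ := (Σ_i |λ_i|³)² / (Σ_i λ_i²)³` for a Hermitian matrix `Θ` with eigenvalues `λ_i`. -/
noncomputable def eta {d : ℕ} {Θ : Matrix (Fin d) (Fin d) ℂ} (hΘ : Θ.IsHermitian) : ℝ :=
  (∑ i, |hΘ.eigenvalues i| ^ 3) ^ 2 / (∑ i, hΘ.eigenvalues i ^ 2) ^ 3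

/-- The complete homogeneous symmetric polynomial of degree `n`, evaluated at `a`. -/
noncomputable def completeHomogeneous {ι : Type*} [Fintype ι] [DecidableEq ι]
    (a : ι → ℝ) (n : ℕ) : ℝ :=
  ∑ k ∈ Finset.piAntidiag Finset.univ n, ∏ i, a i ^ k i

section Symmetric

theorem derivative_prod_geometric {ι : Type*} [DecidableEq ι] (a : ι → ℝ) (s : Finset ι) :
    PowerSeries.derivative ℝ (∏ i ∈ s, PowerSeries.mk fun m => a i ^ m) =
      (∏ i ∈ s, PowerSeries.mk fun m => a i ^ m) *
        ∑ i ∈ s, PowerSeries.mk fun m => a i ^ (m + 1) := by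
  induction s using Finset.induction_on with
  | empty => simp
  | insert i s hi ih =>
    have single : PowerSeries.derivative ℝ (PowerSeries.mk fun m => a i ^ m) =
        (PowerSeries.mk fun m => a i ^ m) * PowerSeries.mk fun m => a i ^ (m + 1) := by
      ext n
      rw [PowerSeries.coeff_derivative, PowerSeries.coeff_mul, PowerSeries.coeff_mk]
      rw [Finset.sum_congr rfl (g := fun _ => a i ^ (n + 1))]
      · simp [mul_comm]
      · intro x hx
        rw [← Finset.HasAntidiagonal.mem_antidiagonal.1 hx]
        simp only [PowerSeries.coeff_mk]
        ring
    rw [Finset.prod_insert hi, Finset.sum_insert hi, Derivation.leibniz, ih, single]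
    simp only [smul_eq_mul]
    ring

variable {ι : Type*} [Fintype ι] [DecidableEq ι]

theorem coeff_prod_geometric (a : ι → ℝ) (n : ℕ) :
    PowerSeries.coeff n (∏ i, PowerSeries.mk fun m => a i ^ m) = completeHomogeneous a n := by
  rw [PowerSeries.coeff_prod, completeHomogeneous]
  refine Finset.sum_bij' (fun k _ => ⇑k) (fun k _ => Finsupp.equivFunOnFinite.symm k) ?_ ?_ ?_ ?_ ?_
  · intro k hk
    simpa using (Finset.mem_finsuppAntidiag.1 hk).1
  · intro k hk
    simpa [Finset.mem_finsuppAntidiag] using hk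
  · intro k _
    ext
    simp
  · intro k _
    rfl
  · intro k _
    simp

/-- Newton's identity for complete homogeneous symmetric polynomials and power sums. -/
theorem completeHomogeneous_newton (a : ι → ℝ) (n : ℕ) :
    (n + 1) * completeHomogeneous a (n + 1) =
      ∑ m ∈ Finset.range (n + 1), completeHomogeneous a m * ∑ i, a i ^ (n - m + 1) := by
  have h := congrArg (PowerSeries.coeff n) (derivative_prod_geometric a Finset.univ)
  rw [PowerSeries.coeff_derivative, coeff_prod_geometric, PowerSeries.coeff_mul,
    Finset.Nat.sum_antidiagonal_eq_sum_range_succ_mk] at h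
  rw [mul_comm, h]
  refine Finset.sum_congr rfl fun m _ => ?_
  simp [coeff_prod_geometric]

theorem completeHomogeneous_zero (a : ι → ℝ) : completeHomogeneous a 0 = 1 := by
  simp [completeHomogeneous]

theorem factorial_mul_completeHomogeneous_one {d : ℕ} (hd : 0 < d) (n : ℕ) :
    n.factorial * completeHomogeneous (fun _ : Fin d => (1 : ℝ)) n = d.ascFactorial n := by
  obtain ⟨d, rfl⟩ := Nat.exists_eq_add_one_of_ne_zero hd.ne'
  rw [← coeff_prod_geometric]
  simp only [one_pow, Finset.prod_const, Finset.card_univ, Fintype.card_fin]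
  rw [show (PowerSeries.mk fun _ => (1 : ℝ)) = PowerSeries.mk 1 from rfl,
    PowerSeries.mk_one_pow_eq_mk_choose_add ℝ d, PowerSeries.coeff_mk,
    Nat.ascFactorial_eq_factorial_mul_choose, Nat.choose_symm_add]
  push_cast
  rfl

end Symmetric

section Derangements

theorem succ_mul_numDerangements_div_factorial (n : ℕ) :
    ((n : ℝ) + 1) * (numDerangements (n + 1) / (n + 1).factorial) =
      ∑ m ∈ Finset.range n, (numDerangements m : ℝ) / m.factorial := by
  induction n with
  | zero => simp
  | succ n ih =>
    rw [Finset.sum_range_succ, ← ih, numDerangements_add_two]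
    simp only [Nat.factorial_succ]
    push_cast
    have := Nat.factorial_ne_zero n
    field_simp
    ring

theorem numDerangements_div_factorial_succ (n : ℕ) :
    (numDerangements (n + 1) : ℝ) / (n + 1).factorial =
      numDerangements n / n.factorial - (-1) ^ n / (n + 1).factorial := by
  have h : (numDerangements (n + 1) : ℝ) = (n + 1) * numDerangements n - (-1) ^ n := by
    exact_mod_cast congrArg (Int.cast : ℤ → ℝ) (numDerangements_succ n)
  rw [h, Nat.factorial_succ]
  push_cast
  have := Nat.factorial_ne_zero n
  field_simp

theorem numDerangements_le_factorial_div_exp {p : ℕ} (hp : Odd p) :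
    (numDerangements p : ℝ) ≤ p.factorial / Real.exp 1 := by
  obtain ⟨k, rfl⟩ := hp
  have mono : Monotone fun k : ℕ =>
      (numDerangements (2 * k + 1) : ℝ) / (2 * k + 1).factorial := by
    refine monotone_nat_of_le_succ fun k => ?_
    rw [show 2 * (k + 1) + 1 = 2 * k + 1 + 1 + 1 by ring,
      numDerangements_div_factorial_succ (2 * k + 1 + 1),
      numDerangements_div_factorial_succ (2 * k + 1)]
    have h₁ : (-1 : ℝ) ^ (2 * k + 1) = -1 := Odd.neg_one_pow ⟨k, rfl⟩
    have h₂ : (-1 : ℝ) ^ (2 * k + 1 + 1) = 1 := Even.neg_one_pow ⟨k + 1, by ring⟩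
    rw [h₁, h₂]
    have : (1 : ℝ) / (2 * k + 1 + 1 + 1).factorial ≤ 1 / (2 * k + 1 + 1).factorial := by
      gcongr
      omega
    rw [neg_div]
    linarith
  have lim := numDerangements_tendsto_inv_e.comp
    (Filter.tendsto_atTop_mono (fun k : ℕ => (by simp only [id]; omega : id k ≤ 2 * k + 1))
      Filter.tendsto_id)
  have h := mono.ge_of_tendsto lim k
  rw [Real.exp_neg] at h
  have := Nat.factorial_pos (2 * k + 1)
  rw [div_le_iff₀ (by positivity)] at h
  rwa [div_eq_mul_inv, mul_comm (Nat.cast _)]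

end Derangements

section Bounds

variable {ι : Type*} [Fintype ι]

theorem abs_le_sqrt_sum_sq (a : ι → ℝ) (i : ι) : |a i| ≤ √(∑ j, a j ^ 2) :=
  Real.abs_le_sqrt (Finset.single_le_sum (f := fun j => a j ^ 2) (fun _ _ => sq_nonneg _)
    (Finset.mem_univ i))

theorem abs_powerSum_le (a : ι → ℝ) (r n : ℕ) :
    |∑ i, a i ^ (r + n)| ≤ (∑ i, |a i| ^ r) * √(∑ i, a i ^ 2) ^ n := by
  refine (Finset.abs_sum_le_sum_abs _ _).trans ?_
  rw [Finset.sum_mul]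
  refine Finset.sum_le_sum fun i _ => ?_
  rw [abs_pow, pow_add]
  gcongr
  exact abs_le_sqrt_sum_sq a i

theorem abs_powerSum_le_of_two_le (a : ι → ℝ) {n : ℕ} (hn : 2 ≤ n) :
    |∑ i, a i ^ n| ≤ √(∑ i, a i ^ 2) ^ n := by
  obtain ⟨n, rfl⟩ := Nat.exists_eq_add_of_le hn
  refine (abs_powerSum_le a 2 n).trans_eq ?_
  simp_rw [sq_abs]
  rw [pow_add, Real.sq_sqrt (Finset.sum_nonneg fun i _ => sq_nonneg _)]

theorem abs_powerSum_le_of_three_le (a : ι → ℝ) {κ : ℝ}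
    (hκ : ∑ i, |a i| ^ 3 = κ * √(∑ i, a i ^ 2) ^ 3) {n : ℕ} (hn : 3 ≤ n) :
    |∑ i, a i ^ n| ≤ κ * √(∑ i, a i ^ 2) ^ n := by
  obtain ⟨n, rfl⟩ := Nat.exists_eq_add_of_le hn
  refine (abs_powerSum_le a 3 n).trans_eq ?_
  rw [hκ, pow_add]
  ring

variable [DecidableEq ι]

theorem abs_completeHomogeneous_succ_le {a : ι → ℝ} (ha : ∑ i, a i = 0) (n : ℕ) {C : ℝ}
    (h : ∀ m < n, |completeHomogeneous a m| * |∑ i, a i ^ (n - m + 1)| ≤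
      C * (numDerangements m / m.factorial)) :
    |completeHomogeneous a (n + 1)| ≤ C * (numDerangements (n + 1) / (n + 1).factorial) := by
  refine le_of_mul_le_mul_left ?_ (by positivity : (0 : ℝ) < n + 1)
  have hn : (0 : ℝ) ≤ n + 1 := by positivity
  rw [← mul_assoc, mul_comm _ C, mul_assoc, succ_mul_numDerangements_div_factorial,
    ← abs_of_nonneg hn, ← abs_mul, completeHomogeneous_newton,
    Finset.sum_range_succ]
  simp only [Nat.sub_self, zero_add, pow_one, ha, mul_zero, add_zero]
  refine (Finset.abs_sum_le_sum_abs _ _).trans ?_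
  rw [Finset.mul_sum]
  refine Finset.sum_le_sum fun m hm => ?_
  rw [abs_mul]
  exact h m (Finset.mem_range.1 hm)

theorem abs_completeHomogeneous_le {a : ι → ℝ} (ha : ∑ i, a i = 0) (n : ℕ) :
    |completeHomogeneous a n| ≤
      √(∑ i, a i ^ 2) ^ n * (numDerangements n / n.factorial) := by
  induction n using Nat.strong_induction_on with
  | _ n ih =>
    cases n with
    | zero => simp [completeHomogeneous_zero]
    | succ n =>
      refine abs_completeHomogeneous_succ_le ha n fun m hm => ?_
      refine (mul_le_mul (ih m (by omega)) (abs_powerSum_le_of_two_le a (by omega))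
        (abs_nonneg _) (by positivity)).trans_eq ?_
      rw [mul_right_comm, ← pow_add]
      congr 2
      omega

theorem abs_completeHomogeneous_le_of_odd {a : ι → ℝ} (ha : ∑ i, a i = 0) {κ : ℝ} (hκ₀ : 0 ≤ κ)
    (hκ : ∑ i, |a i| ^ 3 = κ * √(∑ i, a i ^ 2) ^ 3) {n : ℕ} (hn : Odd n) :
    |completeHomogeneous a n| ≤
      κ * √(∑ i, a i ^ 2) ^ n * (numDerangements n / n.factorial) := by
  induction n using Nat.strong_induction_on with
  | _ n ih =>
    cases n with
    | zero => simp at hn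
    | succ n =>
      have hn' : Even n := by simpa [Nat.odd_add_one] using hn
      refine abs_completeHomogeneous_succ_le ha n fun m hm => ?_
      have split : √(∑ i, a i ^ 2) ^ (n + 1) =
          √(∑ i, a i ^ 2) ^ m * √(∑ i, a i ^ 2) ^ (n - m + 1) := by
        rw [← pow_add]
        congr 1
        omega
      rw [split]
      rcases Nat.even_or_odd m with hm' | hm'
      · have : 3 ≤ n - m + 1 := by
          obtain ⟨u, rfl⟩ := hn'
          obtain ⟨v, rfl⟩ := hm'
          omega
        refine (mul_le_mul (abs_completeHomogeneous_le ha m) (abs_powerSum_le_of_three_le a hκ this)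
          (abs_nonneg _) (by positivity)).trans_eq ?_
        ring
      · refine (mul_le_mul (ih m (by omega) hm') (abs_powerSum_le_of_two_le a (by omega))
          (abs_nonneg _) (by positivity)).trans_eq ?_
        ring

theorem rpow_half_le_ascFactorial (d : ℕ) {p : ℕ} (hp : 2 ≤ p) :
    ((d : ℝ) * (d + 1)) ^ ((p : ℝ) / 2) ≤ d.ascFactorial p := by
  have h₀ : (0 : ℝ) ≤ d * (d + 1) := by positivity
  rw [Real.rpow_div_two_eq_sqrt _ h₀, Real.rpow_natCast]
  have hs : √((d : ℝ) * (d + 1)) ≤ d + 1 := by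
    rw [Real.sqrt_le_left (by positivity)]
    nlinarith [(Nat.cast_nonneg d : (0 : ℝ) ≤ d)]
  induction p, hp using Nat.le_induction with
  | base =>
    rw [Real.sq_sqrt h₀]
    simp [Nat.ascFactorial]
    linarith
  | succ p hp ih =>
    rw [pow_succ', Nat.ascFactorial_succ]
    push_cast
    gcongr
    have : (1 : ℝ) ≤ p := by exact_mod_cast (by omega : 1 ≤ p)
    linarith

end Bounds

section Haar

instance unitaryGroup.compactSpace (d : ℕ) : CompactSpace (Matrix.unitaryGroup (Fin d) ℂ) := by
  refine isCompact_iff_compactSpace.1 ?_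
  have closed : IsClosed (Matrix.unitaryGroup (Fin d) ℂ : Set (Matrix (Fin d) (Fin d) ℂ)) := by
    have : (Matrix.unitaryGroup (Fin d) ℂ : Set (Matrix (Fin d) (Fin d) ℂ)) =
        {A | A * star A = 1} := by
      ext A
      exact Matrix.mem_unitaryGroup_iff
    rw [this]
    exact isClosed_eq (by fun_prop) continuous_const
  refine IsCompact.of_isClosed_subset (isCompact_univ_pi fun _ => isCompact_univ_pi fun _ =>
    isCompact_closedBall (0 : ℂ) 1) closed fun A hA => ?_
  exact fun i _ j _ => mem_closedBall_zero_iff.2 <| entry_norm_bound_of_unitary hA i j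

/-- Every unit vector is the row of some unitary matrix at a prescribed index. -/
theorem exists_unitary_row_eq {d : ℕ} (i₀ : Fin d) {v : EuclideanSpace ℂ (Fin d)} (hv : ‖v‖ = 1) :
    ∃ V : Matrix.unitaryGroup (Fin d) ℂ, ∀ j, (V : Matrix (Fin d) (Fin d) ℂ) i₀ j = v j := by
  have orth : Orthonormal ℂ (({i₀} : Set (Fin d)).domRestrict fun _ : Fin d => v) :=
    ⟨fun _ => hv, fun i j hij => (hij (Subsingleton.elim i j)).elim⟩
  obtain ⟨b, hb⟩ := orth.exists_orthonormalBasis_extension_of_card_eq (by simp)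
  refine ⟨⟨Matrix.of fun i j => b i j, ?_⟩, fun j => by simp [hb i₀ rfl]⟩
  rw [Matrix.mem_unitaryGroup_iff]
  ext i j
  have h := orthonormal_iff_ite.1 b.orthonormal j i
  rw [PiLp.inner_apply] at h
  simpa [Matrix.mul_apply, Matrix.one_apply, eq_comm] using h

variable {d : ℕ} (μ : Measure (Matrix.unitaryGroup (Fin d) ℂ)) [μ.IsHaarMeasure] (ψ : Fin d → ℂ)

theorem integrable_comp_mulVec {E : Type*} [NormedAddCommGroup E] {f : (Fin d → ℂ) → E}
    (hf : Continuous f) :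
    Integrable (fun U : Matrix.unitaryGroup (Fin d) ℂ =>
      f ((U : Matrix (Fin d) (Fin d) ℂ) *ᵥ ψ)) μ :=
  Continuous.integrable_of_hasCompactSupport (by fun_prop) (HasCompactSupport.of_compactSpace _)

theorem integral_comp_mulVec_mulVec {E : Type*} [NormedAddCommGroup E] [NormedSpace ℝ E]
    (V : Matrix.unitaryGroup (Fin d) ℂ) (f : (Fin d → ℂ) → E) :
    ∫ U : Matrix.unitaryGroup (Fin d) ℂ,
        f ((V : Matrix (Fin d) (Fin d) ℂ) *ᵥ (U : Matrix (Fin d) (Fin d) ℂ) *ᵥ ψ) ∂μ =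
      ∫ U : Matrix.unitaryGroup (Fin d) ℂ, f ((U : Matrix (Fin d) (Fin d) ℂ) *ᵥ ψ) ∂μ := by
  rw [← integral_mul_left_eq_self (fun U : Matrix.unitaryGroup (Fin d) ℂ =>
    f ((U : Matrix (Fin d) (Fin d) ℂ) *ᵥ ψ)) V]
  simp [Matrix.mulVec_mulVec]

theorem integral_monomial_mul_conj_eq_zero {α β : Fin d → ℕ} (h : α ≠ β) :
    ∫ U : Matrix.unitaryGroup (Fin d) ℂ,
      (∏ i, ((U : Matrix (Fin d) (Fin d) ℂ) *ᵥ ψ) i ^ α i) *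
        star (∏ i, ((U : Matrix (Fin d) (Fin d) ℂ) *ᵥ ψ) i ^ β i) ∂μ = 0 := by
  obtain ⟨j, hj⟩ := Function.ne_iff.1 h
  have hj' : ((α j : ℂ) - β j) ≠ 0 := sub_ne_zero.2 (by exact_mod_cast hj)
  obtain ⟨z, hz, hzp⟩ : ∃ z : ℂ, z * star z = 1 ∧ z ^ α j * star z ^ β j = -1 := by
    refine ⟨Complex.exp (Real.pi / (α j - β j) * Complex.I), ?_, ?_⟩
    · simp only [Complex.star_def, ← Complex.exp_conj, ← Complex.exp_add]
      simp
    · simp only [Complex.star_def, ← Complex.exp_conj, ← Complex.exp_nat_mul, ← Complex.exp_add]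
      rw [← Complex.exp_pi_mul_I]
      congr 1
      simp
      field_simp
      ring
  let D : Matrix (Fin d) (Fin d) ℂ := Matrix.diagonal (Function.update 1 j z)
  have hD : D ∈ Matrix.unitaryGroup (Fin d) ℂ := by
    rw [Matrix.mem_unitaryGroup_iff, Matrix.star_eq_conjTranspose, Matrix.diagonal_conjTranspose,
      Matrix.diagonal_mul_diagonal, ← Matrix.diagonal_one]
    congr 1
    ext i
    by_cases hi : i = j
    · subst hi
      simpa using hz
    · simp [hi]
  let f : (Fin d → ℂ) → ℂ := fun φ => (∏ i, φ i ^ α i) * star (∏ i, φ i ^ β i)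
  have hprod (γ : Fin d → ℕ) (φ : Fin d → ℂ) :
      ∏ i, (D *ᵥ φ) i ^ γ i = z ^ γ j * ∏ i, φ i ^ γ i := by
    simp only [D, Matrix.mulVec_diagonal, mul_pow, Finset.prod_mul_distrib]
    congr 1
    rw [Finset.prod_eq_single j] <;> simp +contextual
  have hf (φ : Fin d → ℂ) : f (D *ᵥ φ) = -f φ := by
    simp only [f, hprod]
    rw [star_mul', star_pow, mul_mul_mul_comm, hzp]
    ring
  have key := integral_comp_mulVec_mulVec μ ψ ⟨D, hD⟩ f
  simp only [hf, integral_neg] at key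
  exact CharZero.neg_eq_self_iff.1 key

theorem integral_norm_linear_pow (v : Fin d → ℝ) (p : ℕ) :
    ∫ U : Matrix.unitaryGroup (Fin d) ℂ,
      ‖∑ i, (v i : ℂ) * ((U : Matrix (Fin d) (Fin d) ℂ) *ᵥ ψ) i‖ ^ (2 * p) ∂μ =
    ∑ k ∈ Finset.piAntidiag Finset.univ p, (Nat.multinomial Finset.univ k : ℝ) ^ 2 *
      (∫ U : Matrix.unitaryGroup (Fin d) ℂ,
        ∏ i, (‖((U : Matrix (Fin d) (Fin d) ℂ) *ᵥ ψ) i‖ ^ 2) ^ k i ∂μ) *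
      ∏ i, (v i ^ 2) ^ k i := by
  have expand (φ : Fin d → ℂ) : ((‖∑ i, (v i : ℂ) * φ i‖ ^ (2 * p) : ℝ) : ℂ) =
      ∑ k ∈ Finset.piAntidiag Finset.univ p, ∑ l ∈ Finset.piAntidiag Finset.univ p,
        ((Nat.multinomial Finset.univ k : ℂ) * Nat.multinomial Finset.univ l *
          ((∏ i, (v i : ℂ) ^ k i) * ∏ i, (v i : ℂ) ^ l i)) *
          ((∏ i, φ i ^ k i) * star (∏ i, φ i ^ l i)) := by
    have hnorm : ((‖∑ i, (v i : ℂ) * φ i‖ ^ (2 * p) : ℝ) : ℂ) =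
        (∑ i, (v i : ℂ) * φ i) ^ p * star ((∑ i, (v i : ℂ) * φ i) ^ p) := by
      rw [Complex.star_def, Complex.mul_conj', norm_pow, mul_comm 2 p, pow_mul]
      push_cast
      rfl
    rw [hnorm, Finset.sum_pow_eq_sum_piAntidiag, star_sum, Finset.sum_mul_sum]
    refine Finset.sum_congr rfl fun k _ => Finset.sum_congr rfl fun l _ => ?_
    simp only [mul_pow, Finset.prod_mul_distrib, star_mul', star_natCast, star_prod, star_pow,
      Complex.star_def, Complex.conj_ofReal]
    ring
  have int (k l : Fin d → ℕ) (c : ℂ) : Integrable (fun U : Matrix.unitaryGroup (Fin d) ℂ =>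
      c * ((∏ i, ((U : Matrix (Fin d) (Fin d) ℂ) *ᵥ ψ) i ^ k i) *
        star (∏ i, ((U : Matrix (Fin d) (Fin d) ℂ) *ᵥ ψ) i ^ l i))) μ :=
    integrable_comp_mulVec μ ψ
      (f := fun φ => c * ((∏ i, φ i ^ k i) * star (∏ i, φ i ^ l i))) (by fun_prop)
  apply Complex.ofReal_injective
  rw [← integral_complex_ofReal]
  simp only [expand]
  rw [integral_finsetSum _ fun k _ => integrable_finsetSum _ fun l _ => int k l _,
    Complex.ofReal_sum]
  refine Finset.sum_congr rfl fun k hk => ?_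
  rw [integral_finsetSum _ fun l _ => int k l _, Finset.sum_eq_single_of_mem k hk]
  · rw [integral_const_mul]
    push_cast
    rw [← integral_complex_ofReal]
    have hdiag (φ : Fin d → ℂ) : (∏ i, φ i ^ k i) * star (∏ i, φ i ^ k i) =
        ((∏ i, (‖φ i‖ ^ 2) ^ k i : ℝ) : ℂ) := by
      rw [star_prod, ← Finset.prod_mul_distrib]
      push_cast
      refine Finset.prod_congr rfl fun i _ => ?_
      rw [star_pow, ← mul_pow, Complex.star_def, Complex.mul_conj']
    simp only [hdiag, ← Finset.prod_mul_distrib, ← pow_mul, ← pow_add, two_mul]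
    simp only [sq]
    ring
  · intro l _ hlk
    rw [integral_const_mul, integral_monomial_mul_conj_eq_zero μ ψ hlk.symm, mul_zero]

/-- The mixed moments of the squared moduli of the entries of a Haar-random vector are inversely
proportional to the multinomial coefficients. -/
theorem exists_multinomial_mul_moment_eq (hd : 0 < d) (p : ℕ) :
    ∃ c : ℝ, ∀ k ∈ Finset.piAntidiag (Finset.univ : Finset (Fin d)) p,
      (Nat.multinomial Finset.univ k : ℝ) *
        ∫ U : Matrix.unitaryGroup (Fin d) ℂ,
          ∏ i, (‖((U : Matrix (Fin d) (Fin d) ℂ) *ᵥ ψ) i‖ ^ 2) ^ k i ∂μ = c := by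
  let i₀ : Fin d := ⟨0, hd⟩
  let c : ℝ := ∫ U : Matrix.unitaryGroup (Fin d) ℂ,
    ‖((U : Matrix (Fin d) (Fin d) ℂ) *ᵥ ψ) i₀‖ ^ (2 * p) ∂μ
  let M (k : Fin d → ℕ) : ℝ := ∫ U : Matrix.unitaryGroup (Fin d) ℂ,
    ∏ i, (‖((U : Matrix (Fin d) (Fin d) ℂ) *ᵥ ψ) i‖ ^ 2) ^ k i ∂μ
  have isotropic (v : Fin d → ℝ) (hv : 0 < ∑ i, v i ^ 2) :
      ∫ U : Matrix.unitaryGroup (Fin d) ℂ,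
        ‖∑ i, (v i : ℂ) * ((U : Matrix (Fin d) (Fin d) ℂ) *ᵥ ψ) i‖ ^ (2 * p) ∂μ =
      (∑ i, v i ^ 2) ^ p * c := by
    set r := √(∑ i, v i ^ 2) with hr
    have hr₀ : 0 < r := Real.sqrt_pos.2 hv
    have hr₂ : r ^ 2 = ∑ i, v i ^ 2 := Real.sq_sqrt hv.le
    let w : EuclideanSpace ℂ (Fin d) := WithLp.toLp 2 fun i => ((v i / r : ℝ) : ℂ)
    have hw : ‖w‖ = 1 := by
      rw [EuclideanSpace.norm_eq, Real.sqrt_eq_one]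
      simp only [w, Complex.norm_real, Real.norm_eq_abs, sq_abs, div_pow]
      rw [← Finset.sum_div, ← hr₂, div_self (by positivity)]
    obtain ⟨V, hV⟩ := exists_unitary_row_eq i₀ hw
    have hrow (φ : Fin d → ℂ) : ∑ i, (v i : ℂ) * φ i =
        r * ((V : Matrix (Fin d) (Fin d) ℂ) *ᵥ φ) i₀ := by
      have : (r : ℂ) ≠ 0 := by exact_mod_cast hr₀.ne'
      simp only [Matrix.mulVec, dotProduct, hV, w, Finset.mul_sum, Complex.ofReal_div]
      refine Finset.sum_congr rfl fun i _ => ?_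
      field_simp
    simp only [hrow, norm_mul, mul_pow, Complex.norm_real, Real.norm_eq_abs, abs_of_pos hr₀]
    rw [integral_const_mul, pow_mul, hr₂]
    congr 1
    exact integral_comp_mulVec_mulVec μ ψ V fun φ => ‖φ i₀‖ ^ (2 * p)
  let toPoly (f : (Fin d → ℕ) → ℝ) : MvPolynomial (Fin d) ℝ :=
    ∑ k ∈ Finset.piAntidiag Finset.univ p,
      MvPolynomial.monomial (Finsupp.equivFunOnFinite.symm k) (f k)
  have eval_toPoly (f : (Fin d → ℕ) → ℝ) (x : Fin d → ℝ) : MvPolynomial.eval x (toPoly f) =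
      ∑ k ∈ Finset.piAntidiag Finset.univ p, f k * ∏ i, x i ^ k i := by
    simp [toPoly, MvPolynomial.eval_monomial, Finsupp.prod_fintype]
  have coeff_toPoly (f : (Fin d → ℕ) → ℝ) (k) (hk : k ∈ Finset.piAntidiag Finset.univ p) :
      MvPolynomial.coeff (Finsupp.equivFunOnFinite.symm k) (toPoly f) = f k := by
    simp only [toPoly, MvPolynomial.coeff_sum, MvPolynomial.coeff_monomial,
      EmbeddingLike.apply_eq_iff_eq]
    rw [Finset.sum_ite_eq' _ k, if_pos hk]
  have poly_eq : toPoly (fun k => (Nat.multinomial Finset.univ k : ℝ) ^ 2 * M k) =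
      toPoly fun k => (Nat.multinomial Finset.univ k : ℝ) * c := by
    refine MvPolynomial.funext_set (fun _ => Set.Ioi (0 : ℝ)) (fun _ => Set.Ioi_infinite 0) ?_
    intro x hx
    have hx' (i : Fin d) : 0 < x i := hx i trivial
    have hsq (i : Fin d) : √(x i) ^ 2 = x i := Real.sq_sqrt (hx' i).le
    have h₁ := integral_norm_linear_pow μ ψ (fun i => √(x i)) p
    have hpos : 0 < ∑ i, x i := Finset.sum_pos (fun i _ => hx' i) ⟨i₀, Finset.mem_univ _⟩
    rw [isotropic _ (by simpa only [hsq] using hpos)] at h₁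
    simp only [hsq] at h₁
    rw [eval_toPoly, eval_toPoly, ← h₁, Finset.sum_pow_eq_sum_piAntidiag, Finset.sum_mul]
    exact Finset.sum_congr rfl fun k _ => by ring
  refine ⟨c, fun k hk => ?_⟩
  have h := congrArg (MvPolynomial.coeff (Finsupp.equivFunOnFinite.symm k)) poly_eq
  rw [coeff_toPoly _ k hk, coeff_toPoly _ k hk, sq, mul_assoc] at h
  exact mul_left_cancel₀ (by exact_mod_cast (Nat.multinomial_pos _ _).ne') h

theorem exists_integral_weighted_sum_pow_eq (hd : 0 < d) (p : ℕ) :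
    ∃ c : ℝ, ∀ a : Fin d → ℝ, ∫ U : Matrix.unitaryGroup (Fin d) ℂ,
      (∑ i, a i * ‖((U : Matrix (Fin d) (Fin d) ℂ) *ᵥ ψ) i‖ ^ 2) ^ p ∂μ =
        c * completeHomogeneous a p := by
  obtain ⟨c, hc⟩ := exists_multinomial_mul_moment_eq μ ψ hd p
  refine ⟨c, fun a => ?_⟩
  simp only [Finset.sum_pow_eq_sum_piAntidiag, mul_pow, Finset.prod_mul_distrib, ← mul_assoc]
  rw [integral_finsetSum, completeHomogeneous, Finset.mul_sum]
  · refine Finset.sum_congr rfl fun k hk => ?_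
    rw [integral_const_mul, ← hc k hk]
    ring
  · intro k _
    exact integrable_comp_mulVec μ ψ (f := fun φ => (Nat.multinomial Finset.univ k : ℝ) *
      (∏ i, a i ^ k i) * ∏ i, (‖φ i‖ ^ 2) ^ k i) (by fun_prop)

theorem sum_norm_sq_unitary_mulVec (U : Matrix.unitaryGroup (Fin d) ℂ) :
    ∑ i, ‖((U : Matrix (Fin d) (Fin d) ℂ) *ᵥ ψ) i‖ ^ 2 = ∑ i, ‖ψ i‖ ^ 2 := by
  have h (φ : Fin d → ℂ) : ((∑ i, ‖φ i‖ ^ 2 : ℝ) : ℂ) = star φ ⬝ᵥ φ := by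
    simp [dotProduct, Complex.conj_mul']
  apply Complex.ofReal_injective
  rw [h, h, Matrix.star_mulVec, Matrix.dotProduct_mulVec, Matrix.vecMul_vecMul,
    ← Matrix.star_eq_conjTranspose, Matrix.mem_unitaryGroup_iff'.1 U.2, Matrix.vecMul_one]

/-- The moments of a real diagonal observable in a Haar-random pure state. -/
theorem integral_weighted_sum_pow [IsProbabilityMeasure μ] (hd : 0 < d) (p : ℕ)
    (hψ : ∑ i, ‖ψ i‖ ^ 2 = 1) (a : Fin d → ℝ) :
    (∫ U : Matrix.unitaryGroup (Fin d) ℂ,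
      (∑ i, a i * ‖((U : Matrix (Fin d) (Fin d) ℂ) *ᵥ ψ) i‖ ^ 2) ^ p ∂μ) *
        completeHomogeneous (fun _ : Fin d => (1 : ℝ)) p = completeHomogeneous a p := by
  obtain ⟨c, hc⟩ := exists_integral_weighted_sum_pow_eq μ ψ hd p
  have h₁ := hc fun _ => 1
  simp only [one_mul, sum_norm_sq_unitary_mulVec, hψ, one_pow, integral_const, probReal_univ,
    smul_eq_mul, mul_one] at h₁
  rw [hc, mul_right_comm, ← h₁, one_mul]

end Haar

section Observable

variable {d : ℕ} {A : Matrix (Fin d) (Fin d) ℂ}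

theorem trace_pow_eq_sum_eigenvalues_pow (hA : A.IsHermitian) (n : ℕ) :
    (A ^ n).trace = ∑ i, (hA.eigenvalues i : ℂ) ^ n := by
  conv_lhs => rw [hA.spectral_theorem]
  rw [← map_pow, Unitary.conjStarAlgAut_apply, Matrix.trace_mul_comm, ← mul_assoc,
    Unitary.coe_star_mul_self, one_mul, Matrix.diagonal_pow, Matrix.trace_diagonal]
  rfl

theorem dotProduct_mulVec_eq_sum_eigenvalues (hA : A.IsHermitian) (φ : Fin d → ℂ) :
    star φ ⬝ᵥ A *ᵥ φ = ((∑ i, hA.eigenvalues i *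
      ‖((star hA.eigenvectorUnitary : Matrix.unitaryGroup (Fin d) ℂ).1 *ᵥ φ) i‖ ^ 2 : ℝ) : ℂ) := by
  set V := hA.eigenvectorUnitary with hV
  have hstar : star φ ᵥ* (V : Matrix (Fin d) (Fin d) ℂ) = star ((star V).1 *ᵥ φ) := by
    rw [Matrix.star_mulVec, Unitary.coe_star, Matrix.star_eq_conjTranspose,
      Matrix.conjTranspose_conjTranspose]
  conv_lhs => rw [hA.spectral_theorem]
  rw [Unitary.conjStarAlgAut_apply, ← hV, ← Matrix.mulVec_mulVec, ← Matrix.mulVec_mulVec,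
    Matrix.dotProduct_mulVec, hstar, ← Unitary.coe_star]
  simp only [dotProduct, Matrix.mulVec_diagonal, Pi.star_apply, Function.comp_apply]
  push_cast
  refine Finset.sum_congr rfl fun i _ => ?_
  rw [← Complex.conj_mul']
  simp only [Complex.star_def, Complex.coe_algebraMap]
  ring

/-- Evaluating `H` in the pure state `U ψ` and centring is evaluating the traceless part of `H`. -/
theorem trace_pure_state_sub_mean (H : Matrix (Fin d) (Fin d) ℂ)
    (ψ : Fin d → ℂ) (hψ : ∑ i, ‖ψ i‖ ^ 2 = 1) (U : Matrix.unitaryGroup (Fin d) ℂ) :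
    ((U : Matrix (Fin d) (Fin d) ℂ) * Matrix.vecMulVec ψ (star ψ)
      * star (U : Matrix (Fin d) (Fin d) ℂ) * H).trace.re - H.trace.re / d =
    (star ((U : Matrix (Fin d) (Fin d) ℂ) *ᵥ ψ) ⬝ᵥ
      (H - (H.trace / (d : ℂ)) • (1 : Matrix (Fin d) (Fin d) ℂ)) *ᵥ
        ((U : Matrix (Fin d) (Fin d) ℂ) *ᵥ ψ)).re := by
  set φ := (U : Matrix (Fin d) (Fin d) ℂ) *ᵥ ψ with hφ
  have hnorm : star φ ⬝ᵥ φ = 1 := by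
    have h := sum_norm_sq_unitary_mulVec ψ U
    rw [hψ] at h
    have h' := congrArg (Complex.ofReal) h
    simpa [dotProduct, Complex.conj_mul'] using h'
  have hproj : (U : Matrix (Fin d) (Fin d) ℂ) * Matrix.vecMulVec ψ (star ψ)
      * star (U : Matrix (Fin d) (Fin d) ℂ) = Matrix.vecMulVec φ (star φ) := by
    rw [Matrix.mul_vecMulVec, Matrix.vecMulVec_mul, hφ, Matrix.star_mulVec,
      Matrix.star_eq_conjTranspose]
  rw [hproj, Matrix.vecMulVec_mul, Matrix.trace_vecMulVec, Matrix.sub_mulVec, dotProduct_sub,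
    Matrix.smul_mulVec, Matrix.one_mulVec, dotProduct_smul, hnorm,
    Matrix.dotProduct_mulVec _ H, dotProduct_comm φ]
  simp [Complex.div_natCast_re]

theorem trace_sub_mean_eq_zero (hd : 0 < d) (H : Matrix (Fin d) (Fin d) ℂ) :
    (H - (H.trace / (d : ℂ)) • (1 : Matrix (Fin d) (Fin d) ℂ)).trace = 0 := by
  have : (d : ℂ) ≠ 0 := by exact_mod_cast hd.ne'
  simp [this]

theorem sqrt_eta_mul (hA : A.IsHermitian) :
    ∑ i, |hA.eigenvalues i| ^ 3 = √(eta hA) * √(∑ i, hA.eigenvalues i ^ 2) ^ 3 := by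
  have hnn : (0 : ℝ) ≤ ∑ i, hA.eigenvalues i ^ 2 := Finset.sum_nonneg fun _ _ => sq_nonneg _
  have hc : (0 : ℝ) ≤ ∑ i, |hA.eigenvalues i| ^ 3 := Finset.sum_nonneg fun _ _ => by positivity
  rcases hnn.eq_or_lt with h | h
  · have hz := (Finset.sum_eq_zero_iff_of_nonneg fun _ _ => sq_nonneg _).1 h.symm
    rw [← h, Finset.sum_eq_zero fun i hi => by
      simp [pow_eq_zero_iff two_ne_zero |>.1 (hz i hi)]]
    simp
  · have hcube : √((∑ i, hA.eigenvalues i ^ 2) ^ 3) = √(∑ i, hA.eigenvalues i ^ 2) ^ 3 := by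
      rw [Real.sqrt_eq_iff_mul_self_eq_of_pos (by positivity), ← mul_pow, Real.mul_self_sqrt hnn]
    rw [eta, Real.sqrt_div (by positivity), Real.sqrt_sq hc, hcube,
      div_mul_cancel₀ _ (by positivity)]

end Observable

/-- **Statement 11.** Pure-state odd central moments are small: for odd `p ≥ 3`,
`|Σ^(p)| ≤ √η_{ΔH}·⌈p!/e⌉·(Tr[ΔH²])^{p/2}/(d(d+1))^{p/2}`. -/
theorem pure_state_odd_moment_bound (d : ℕ) (hd : 2 ≤ d)
    (μ : Measure (Matrix.unitaryGroup (Fin d) ℂ))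
    [μ.IsHaarMeasure] [IsProbabilityMeasure μ]
    (H : Matrix (Fin d) (Fin d) ℂ) (hH : H.IsHermitian)
    (hΔH : (H - (H.trace / (d : ℂ)) • (1 : Matrix (Fin d) (Fin d) ℂ)).IsHermitian)
    (hΔHne : H - (H.trace / (d : ℂ)) • (1 : Matrix (Fin d) (Fin d) ℂ) ≠ 0)
    (ψ : Fin d → ℂ) (hψ : ∑ i, ‖ψ i‖ ^ 2 = 1)
    (p : ℕ) (hp : 3 ≤ p) (hpo : Odd p)
    (Sp : ℝ)
    (hSp : Sp = ∫ U : Matrix.unitaryGroup (Fin d) ℂ,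
        (((U : Matrix (Fin d) (Fin d) ℂ) * Matrix.vecMulVec ψ (star ψ)
            * star (U : Matrix (Fin d) (Fin d) ℂ) * H).trace.re - H.trace.re / d) ^ p ∂μ) :
    |Sp| ≤ Real.sqrt (eta hΔH) * (⌈(p.factorial : ℝ) / Real.exp 1⌉ : ℝ)
        * (((H - (H.trace / (d : ℂ)) • 1) ^ 2).trace.re) ^ ((p : ℝ) / 2)
        / ((d : ℝ) * ((d : ℝ) + 1)) ^ ((p : ℝ) / 2) := by
  have hd₀ : 0 < d := by omega
  set s := √(∑ i, hΔH.eigenvalues i ^ 2) with hs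
  have hsum : ∑ i, hΔH.eigenvalues i = 0 := by
    have h := trace_pow_eq_sum_eigenvalues_pow hΔH 1
    simp only [pow_one, trace_sub_mean_eq_zero hd₀] at h
    exact_mod_cast h.symm
  have htr : ((H - (H.trace / (d : ℂ)) • (1 : Matrix (Fin d) (Fin d) ℂ)) ^ 2).trace.re =
      ∑ i, hΔH.eigenvalues i ^ 2 := by
    rw [trace_pow_eq_sum_eigenvalues_pow hΔH 2]
    norm_cast
  have hmoment : Sp * d.ascFactorial p =
      p.factorial * completeHomogeneous hΔH.eigenvalues p := by
    rw [← factorial_mul_completeHomogeneous_one hd₀ p,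
      ← integral_weighted_sum_pow μ ψ hd₀ p hψ hΔH.eigenvalues, mul_left_comm]
    congr 2
    rw [hSp, ← integral_comp_mulVec_mulVec μ ψ (star hΔH.eigenvectorUnitary)
      fun φ => (∑ i, hΔH.eigenvalues i * ‖φ i‖ ^ 2) ^ p]
    simp only [trace_pure_state_sub_mean H ψ hψ, dotProduct_mulVec_eq_sum_eigenvalues hΔH,
      Complex.ofReal_re]
  have hbound : |Sp| * d.ascFactorial p ≤ √(eta hΔH) * s ^ p * numDerangements p := by
    have h := abs_completeHomogeneous_le_of_odd hsum (Real.sqrt_nonneg _) (sqrt_eta_mul hΔH) hpo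
    have hf : (0 : ℝ) < p.factorial := by exact_mod_cast p.factorial_pos
    rw [← mul_div_assoc, le_div_iff₀ hf] at h
    rw [← Nat.abs_cast (d.ascFactorial p), ← abs_mul, hmoment, abs_mul, Nat.abs_cast, mul_comm]
    exact h
  have hder : (numDerangements p : ℝ) ≤ ⌈(p.factorial : ℝ) / Real.exp 1⌉ :=
    (numDerangements_le_factorial_div_exp hpo).trans (Int.le_ceil _)
  rw [htr, Real.rpow_div_two_eq_sqrt _ (Finset.sum_nonneg fun _ _ => sq_nonneg _), ← hs,
    Real.rpow_natCast, le_div_iff₀ (by positivity)]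
  calc |Sp| * ((d : ℝ) * (d + 1)) ^ ((p : ℝ) / 2)
      ≤ |Sp| * d.ascFactorial p := by
        gcongr
        exact rpow_half_le_ascFactorial d (by omega)
    _ ≤ √(eta hΔH) * s ^ p * numDerangements p := hbound
    _ ≤ √(eta hΔH) * s ^ p * ⌈(p.factorial : ℝ) / Real.exp 1⌉ := by gcongr
    _ = √(eta hΔH) * ⌈(p.factorial : ℝ) / Real.exp 1⌉ * s ^ p := by ring
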